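/- Fix a > 0, suppose f(t) ≥ 0 for all t ∈ (0,a), and let m(t) := min{f(s) : t ≤ s ≤ a} for t ∈ [0,a] be the backwards running minimum of f on [0,a]. Then for every connected component (u, v) of the relatively open set {t ∈ [0,a] : f(t) > m(t)} one has ξ{s ∈ (u,v) : τ(s) ≤ a} = ξ((u,v)) = η((u,v)). -/

import Mathlib

open MeasureTheory

/-- The function `f(t) = ξ[0,t] − η[0,t]` for `t ≥ 0` and `f(t) = η[t,0] − ξ[t,0]` for `t < 0`. -/
noncomputable def fdiff (ξ η : Measure ℝ) (t : ℝ) : ℝ :=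
  if 0 ≤ t then (ξ (Set.Icc 0 t)).toReal - (η (Set.Icc 0 t)).toReal
  else (η (Set.Icc t 0)).toReal - (ξ (Set.Icc t 0)).toReal

/-- `τ(s) = inf {t > s : ξ[s,t] = η[s,t]}`, with values in `(−∞,∞]` (i.e. `EReal`),
`inf ∅ = ∞`. -/
noncomputable def tauE (ξ η : Measure ℝ) (s : ℝ) : EReal :=
  sInf {x : EReal | ∃ t : ℝ, s < t ∧ ξ (Set.Icc s t) = η (Set.Icc s t) ∧ x = (t : EReal)}

/-- The backwards running minimum `m(t) = min {f(s) : t ≤ s ≤ a}`. -/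
noncomputable def runMin (ξ η : Measure ℝ) (a t : ℝ) : ℝ :=
  sInf (fdiff ξ η '' Set.Icc t a)

/-!
Since `ξ` and `η` are diffuse and locally finite, `f` is continuous with increments
`f t - f s = ξ [s, t] - η [s, t]`, and `m t < f t` says that `f` does not attain its minimum over
`[t, a]` at `t`.

Let `(u, v)` be a component; its endpoints lie outside the excursion set. For `s ∈ (u, v)`, a
minimiser `w` of `f` over `[s, a]` also minimises `f` over `[w, a]`, so `w` is not in `(u, v)`, and
`f v ≤ f w ≤ f s` because `f` is minimal over `[v, a]` at `v`. Letting `s → u` gives `f u = f v`,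
i.e. `ξ (u, v) = η (u, v)`; this is Riesz's rising sun argument.

If `s ∈ (u, v)` and `τ s > a`, then `f` goes below `f s` on `[s, a]` without returning to the level
`f s`, so `f ≤ f s` on `[s, a]`. Thus `f` is antitone on `A = {s ∈ (u, v) | τ s > a}`, which means
`ξ [s, t] ≤ η [s, t]` for `s, t ∈ A`. Exhausting `A ∩ J` by such
`[s, t]` yields `ξ (A ∩ J) ≤ η J` for every open interval `J`, hence `ξ|_A ≤ η` by outer
regularity, and singularity gives `ξ A = 0`.
-/

open Set

section Order

lemma csInf_image_lt_iff_not_isMinOn {α β : Type*} [ConditionallyCompleteLinearOrder β]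
    {f : α → β} {s : Set α} {x : α} (hx : x ∈ s) (hf : BddBelow (f '' s)) :
    sInf (f '' s) < f x ↔ ¬IsMinOn f s x := by
  rw [csInf_lt_iff hf ⟨f x, mem_image_of_mem f hx⟩, isMinOn_iff]
  simp only [exists_mem_image, not_forall, not_le, exists_prop]

variable {α β : Type*} [TopologicalSpace α]

lemma left_notMem_of_connectedComponentIn_eq_Ioo [ConditionallyCompleteLinearOrder α]
    [OrderTopology α] [DenselyOrdered α] {E : Set α} {x u v : α} (hx : x ∈ E)
    (hE : connectedComponentIn E x = Ioo u v) : u ∉ E := by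
  intro hu
  have hxuv : x ∈ Ioo u v := hE ▸ mem_connectedComponentIn hx
  have huv : u < v := hxuv.1.trans hxuv.2
  have hsub : Ico u v ⊆ E := by
    rw [← Ioo_insert_left huv, ← hE]
    exact insert_subset hu (connectedComponentIn_subset E x)
  have hIco := isPreconnected_Ico.subset_connectedComponentIn (Ioo_subset_Ico_self hxuv) hsub
  exact left_notMem_Ioo (hE ▸ hIco (left_mem_Ico.2 huv))

lemma right_notMem_of_connectedComponentIn_eq_Ioo [ConditionallyCompleteLinearOrder α]
    [OrderTopology α] [DenselyOrdered α] {E : Set α} {x u v : α} (hx : x ∈ E)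
    (hE : connectedComponentIn E x = Ioo u v) : v ∉ E :=
  left_notMem_of_connectedComponentIn_eq_Ioo (α := αᵒᵈ) (u := OrderDual.toDual v)
    (v := OrderDual.toDual u) hx (hE.trans Ioo_toDual.symm)

variable [LinearOrder β] [TopologicalSpace β] [OrderClosedTopology β] {f : α → β}

lemma eq_of_forall_Ioo_not_isMinOn [LinearOrder α] [OrderTopology α] [DenselyOrdered α]
    [CompactIccSpace α] {u v a : α} (huv : u < v) (hva : v ≤ a) (hf : ContinuousOn f (Icc u a))
    (hu : IsMinOn f (Icc u a) u) (hv : IsMinOn f (Icc v a) v)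
    (hIoo : ∀ s ∈ Ioo u v, ¬IsMinOn f (Icc s a) s) : f u = f v := by
  have le_on_Ioo : ∀ s ∈ Ioo u v, f v ≤ f s := by
    intro s hs
    have hsa : s ≤ a := hs.2.le.trans hva
    obtain ⟨w, hw, hmin⟩ := isCompact_Icc.exists_isMinOn (nonempty_Icc.2 hsa)
      (hf.mono (Icc_subset_Icc_left hs.1.le))
    have hvw : v ≤ w := not_lt.1 fun hwv ↦
      hIoo w ⟨hs.1.trans_le hw.1, hwv⟩ (hmin.on_subset (Icc_subset_Icc_left hw.1))
    exact (hv ⟨hvw, hw.2⟩).trans (hmin (left_mem_Icc.2 hsa))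
  have hu_closure : u ∈ closure (Ioo u v) := closure_Ioo huv.ne ▸ left_mem_Icc.2 huv.le
  have hfu : ContinuousWithinAt f (Ioo u v) u :=
    (hf u (left_mem_Icc.2 (huv.le.trans hva))).mono
      (Ioo_subset_Icc_self.trans (Icc_subset_Icc_right hva))
  exact le_antisymm (hu ⟨huv.le, hva⟩)
    (closure_minimal (image_subset_iff.2 le_on_Ioo) isClosed_Ici (hfu.mem_closure_image hu_closure))

lemma isMaxOn_of_not_isMinOn_of_forall_ne [ConditionallyCompleteLinearOrder α] [OrderTopology α]
    [DenselyOrdered α] {s a : α} (hf : ContinuousOn f (Icc s a))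
    (hmin : ¬IsMinOn f (Icc s a) s) (hne : ∀ t ∈ Ioc s a, f t ≠ f s) :
    IsMaxOn f (Icc s a) s := by
  obtain ⟨w, hw, hws⟩ : ∃ w ∈ Icc s a, f w < f s := by
    simpa only [isMinOn_iff, not_forall, not_le, exists_prop] using hmin
  refine isMaxOn_iff.2 fun t ht ↦ not_lt.1 fun hst ↦ ?_
  have mem_Ioc : ∀ y ∈ Icc s a, f y ≠ f s → y ∈ Ioc s a := fun y hy hys ↦
    ⟨hy.1.lt_of_ne (by rintro rfl; exact hys rfl), hy.2⟩
  have hsub : uIcc w t ⊆ Ioc s a :=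
    ordConnected_Ioc.uIcc_subset (mem_Ioc w hw hws.ne) (mem_Ioc t ht hst.ne')
  obtain ⟨y, hy, hys⟩ := intermediate_value_uIcc (hf.mono (hsub.trans Ioc_subset_Icc_self))
    (mem_uIcc_of_le hws.le hst.le)
  exact hne y (hsub hy) hys

end Order

section Comparison

variable {α : Type*} [TopologicalSpace α] [MeasurableSpace α] {μ ν : Measure α}

lemma measure_le_of_forall_Icc_le [LinearOrder α] [OrderClosedTopology α]
    [SecondCountableTopology α] {A J : Set α} (hAJ : A ⊆ J) (hJ : J.OrdConnected)
    (hA : ∀ s ∈ A, ∀ t ∈ A, μ (Icc s t) ≤ ν (Icc s t)) : μ A ≤ ν J := by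
  obtain ⟨D, hDc, hD, hbot, htop⟩ := exists_countable_dense_bot_top A
  let I : A × A → Set α := fun p ↦ Icc p.1 p.2
  have hcover : A ⊆ ⋃ p ∈ D ×ˢ D, I p := by
    intro x hx
    obtain ⟨s, hs, hsx⟩ := hD.exists_le' hbot ⟨x, hx⟩
    obtain ⟨t, ht, hxt⟩ := hD.exists_ge' htop ⟨x, hx⟩
    exact mem_biUnion (mk_mem_prod hs ht) ⟨hsx, hxt⟩
  have hdir : DirectedOn (fun p q ↦ I p ⊆ I q) (D ×ˢ D) := by
    rintro ⟨s, t⟩ ⟨hs, ht⟩ ⟨s', t'⟩ ⟨hs', ht'⟩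
    refine ⟨(min s s', max t t'), ⟨?_, ?_⟩, Icc_subset_Icc (min_le_left s s') (le_max_left t t'),
      Icc_subset_Icc (min_le_right s s') (le_max_right t t')⟩
    · exact min_rec' (· ∈ D) hs hs'
    · exact max_rec' (· ∈ D) ht ht'
  calc μ A ≤ μ (⋃ p ∈ D ×ˢ D, I p) := measure_mono hcover
    _ = ⨆ p ∈ D ×ˢ D, μ (I p) := measure_biUnion_eq_iSup (hDc.prod hDc) hdir
    _ ≤ ν J := iSup₂_le fun p _ ↦ (hA p.1 p.1.2 p.2 p.2.2).trans
        (measure_mono (hJ.out (hAJ p.1.2) (hAJ p.2.2)))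

lemma measure_le_of_forall_isPreconnected_le [LocallyConnectedSpace α]
    [TopologicalSpace.SeparableSpace α] [OpensMeasurableSpace α] {U : Set α} (hU : IsOpen U)
    (h : ∀ J, IsOpen J → IsPreconnected J → μ J ≤ ν J) : μ U ≤ ν U := by
  let C : Set (Set α) := connectedComponentIn U '' U
  have hUC : U = ⋃ J ∈ C, id J := by
    refine Subset.antisymm (fun x hx ↦
      mem_biUnion (mem_image_of_mem _ hx) (mem_connectedComponentIn hx)) ?_
    simpa [C] using fun x _ ↦ connectedComponentIn_subset U x
  have hopen : ∀ J ∈ C, IsOpen J := forall_mem_image.2 fun _ _ ↦ hU.connectedComponentIn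
  have hdisj : C.PairwiseDisjoint id := by
    rintro _ ⟨x, -, rfl⟩ _ ⟨y, -, rfl⟩ hne
    refine disjoint_left.2 fun z hzx hzy ↦ hne ?_
    exact (connectedComponentIn_eq hzx).trans (connectedComponentIn_eq hzy).symm
  have hcount : C.Countable := hdisj.countable_of_isOpen hopen
    (forall_mem_image.2 fun x hx ↦ ⟨x, mem_connectedComponentIn hx⟩)
  have hmeas : ∀ J ∈ C, MeasurableSet J := fun J hJ ↦ (hopen J hJ).measurableSet
  rw [hUC, measure_biUnion hcount hdisj hmeas, measure_biUnion hcount hdisj hmeas]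
  refine ENNReal.tsum_le_tsum fun J ↦ h J (hopen J J.2) ?_
  obtain ⟨x, -, hx⟩ := J.2
  exact hx ▸ isPreconnected_connectedComponentIn

lemma measure_le_of_forall_isOpen_le [ν.OuterRegular] (h : ∀ U, IsOpen U → μ U ≤ ν U) :
    μ ≤ ν := by
  refine Measure.le_intro fun s _ _ ↦ ?_
  rw [s.measure_eq_iInf_isOpen ν]
  exact le_iInf₂ fun U hsU ↦ le_iInf fun hU ↦ (measure_mono hsU).trans (h U hU)

lemma measure_eq_zero_of_forall_Icc_le_of_mutuallySingular [LinearOrder α]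
    [OrderClosedTopology α] [SecondCountableTopology α] [LocallyConnectedSpace α]
    [OpensMeasurableSpace α] [ν.OuterRegular] (hsing : μ.MutuallySingular ν) {A : Set α}
    (hA : ∀ s ∈ A, ∀ t ∈ A, μ (Icc s t) ≤ ν (Icc s t)) : μ A = 0 := by
  have hle : μ.restrict A ≤ ν := by
    refine measure_le_of_forall_isOpen_le fun U hU ↦
      measure_le_of_forall_isPreconnected_le hU fun J hJ hJc ↦ ?_
    rw [Measure.restrict_apply hJ.measurableSet]
    exact measure_le_of_forall_Icc_le inter_subset_left hJc.ordConnected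
      fun s hs t ht ↦ hA s hs.2 t ht.2
  exact Measure.restrict_eq_zero.1 <|
    Measure.eq_zero_of_absolutelyContinuous_of_mutuallySingular hle.absolutelyContinuous
      (hsing.restrict A)

end Comparison

section Fdiff

variable {ξ η : Measure ℝ} [NullSingletonClass ξ] [NullSingletonClass η]

lemma fdiff_eq_intervalIntegral_sub (t : ℝ) :
    fdiff ξ η t = (∫ _ in (0 : ℝ)..t, (1 : ℝ) ∂ξ) - ∫ _ in (0 : ℝ)..t, (1 : ℝ) ∂η := by
  simp only [fdiff, intervalIntegral.integral_const', smul_eq_mul, mul_one, Measure.real,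
    ← measure_congr (Ioc_ae_eq_Icc (μ := ξ)), ← measure_congr (Ioc_ae_eq_Icc (μ := η))]
  split_ifs with ht
  · simp only [Ioc_eq_empty_of_le ht, measure_empty, ENNReal.toReal_zero, sub_zero]
  · simp only [Ioc_eq_empty_of_le (not_le.1 ht).le, measure_empty, ENNReal.toReal_zero]
    ring

variable [IsLocallyFiniteMeasure ξ] [IsLocallyFiniteMeasure η]

lemma continuous_fdiff : Continuous (fdiff ξ η) := by
  rw [funext fdiff_eq_intervalIntegral_sub]
  exact (intervalIntegral.continuous_primitive (fun _ _ ↦ intervalIntegrable_const) 0).sub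
    (intervalIntegral.continuous_primitive (fun _ _ ↦ intervalIntegrable_const) 0)

lemma fdiff_sub_fdiff {s t : ℝ} (hst : s ≤ t) :
    fdiff ξ η t - fdiff ξ η s = ξ.real (Icc s t) - η.real (Icc s t) := by
  have increment (μ : Measure ℝ) [NullSingletonClass μ] [IsLocallyFiniteMeasure μ] :
      (∫ _ in (0 : ℝ)..t, (1 : ℝ) ∂μ) - (∫ _ in (0 : ℝ)..s, (1 : ℝ) ∂μ) = μ.real (Icc s t) := by
    rw [intervalIntegral.integral_interval_sub_left intervalIntegrable_const
      intervalIntegrable_const, intervalIntegral.integral_of_le hst, ← integral_Icc_eq_integral_Ioc,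
      setIntegral_const, smul_eq_mul, mul_one]
  rw [fdiff_eq_intervalIntegral_sub, fdiff_eq_intervalIntegral_sub, ← increment ξ, ← increment η]
  ring

lemma fdiff_le_fdiff_iff {s t : ℝ} (hst : s ≤ t) :
    fdiff ξ η t ≤ fdiff ξ η s ↔ ξ (Icc s t) ≤ η (Icc s t) := by
  rw [← sub_nonpos, fdiff_sub_fdiff hst, sub_nonpos]
  exact ENNReal.toReal_le_toReal isCompact_Icc.measure_ne_top isCompact_Icc.measure_ne_top

lemma fdiff_eq_fdiff_iff {s t : ℝ} (hst : s ≤ t) :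
    fdiff ξ η t = fdiff ξ η s ↔ ξ (Icc s t) = η (Icc s t) := by
  rw [← sub_eq_zero, fdiff_sub_fdiff hst, sub_eq_zero]
  exact ENNReal.toReal_eq_toReal_iff' isCompact_Icc.measure_ne_top isCompact_Icc.measure_ne_top

lemma runMin_lt_fdiff_iff {a t : ℝ} (hta : t ≤ a) :
    runMin ξ η a t < fdiff ξ η t ↔ ¬IsMinOn (fdiff ξ η) (Icc t a) t :=
  csInf_image_lt_iff_not_isMinOn (left_mem_Icc.2 hta)
    (isCompact_Icc.image continuous_fdiff).bddBelow

lemma measure_eq_zero_of_antitoneOn_fdiff (hsing : ξ.MutuallySingular η) {A : Set ℝ}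
    (hA : AntitoneOn (fdiff ξ η) A) : ξ A = 0 := by
  refine measure_eq_zero_of_forall_Icc_le_of_mutuallySingular hsing fun s hs t ht ↦ ?_
  rcases le_or_gt s t with hst | hts
  · exact (fdiff_le_fdiff_iff hst).1 (hA hs ht hst)
  · simp only [Icc_eq_empty_of_lt hts, measure_empty, le_refl]

lemma tauE_le_of_fdiff_eq {s t : ℝ} (hst : s < t) (h : fdiff ξ η t = fdiff ξ η s) :
    tauE ξ η s ≤ t :=
  sInf_le ⟨t, hst, (fdiff_eq_fdiff_iff hst.le).1 h, rfl⟩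

lemma isMaxOn_fdiff_of_lt_tauE {s a : ℝ} (hmin : ¬IsMinOn (fdiff ξ η) (Icc s a) s)
    (ha : (a : EReal) < tauE ξ η s) : IsMaxOn (fdiff ξ η) (Icc s a) s :=
  isMaxOn_of_not_isMinOn_of_forall_ne continuous_fdiff.continuousOn hmin fun _ ht hts ↦
    ha.not_ge ((tauE_le_of_fdiff_eq ht.1 hts).trans (EReal.coe_le_coe_iff.2 ht.2))

lemma measure_setOf_tauE_le (hsing : ξ.MutuallySingular η) {I : Set ℝ} {a : ℝ} (hIa : I ⊆ Iic a)
    (hI : ∀ s ∈ I, ¬IsMinOn (fdiff ξ η) (Icc s a) s) :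
    ξ {s ∈ I | tauE ξ η s ≤ a} = ξ I := by
  refine measure_eq_measure_of_null_sdiff (sep_subset I _)
    (measure_eq_zero_of_antitoneOn_fdiff hsing ?_)
  rintro s ⟨hs, hsτ⟩ t ⟨ht, -⟩ hst
  exact isMaxOn_fdiff_of_lt_tauE (hI s hs) (not_le.1 fun h ↦ hsτ ⟨hs, h⟩) ⟨hst, hIa ht⟩

lemma measure_Ioo_eq_of_fdiff_eq {u v : ℝ} (huv : u ≤ v) (h : fdiff ξ η v = fdiff ξ η u) :
    ξ (Ioo u v) = η (Ioo u v) := by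
  rw [measure_congr Ioo_ae_eq_Icc, measure_congr Ioo_ae_eq_Icc]
  exact (fdiff_eq_fdiff_iff huv).1 h

theorem excursion_balance_general (hsing : ξ.MutuallySingular η) {b a u v : ℝ}
    (hcomp : ∃ x ∈ {t ∈ Icc b a | runMin ξ η a t < fdiff ξ η t},
      connectedComponentIn {t ∈ Icc b a | runMin ξ η a t < fdiff ξ η t} x = Ioo u v) :
    ξ {s ∈ Ioo u v | tauE ξ η s ≤ (a : EReal)} = ξ (Ioo u v) ∧ ξ (Ioo u v) = η (Ioo u v) := by
  obtain ⟨x, hx, hE⟩ := hcomp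
  have hxuv : x ∈ Ioo u v := hE ▸ mem_connectedComponentIn hx
  have huv : u < v := hxuv.1.trans hxuv.2
  have hsub := hE ▸ connectedComponentIn_subset _ x
  have hIcc : Icc u v ⊆ Icc b a :=
    closure_Ioo huv.ne ▸ closure_minimal (fun s hs ↦ (hsub hs).1) isClosed_Icc
  have hIoo (s) (hs : s ∈ Ioo u v) : ¬IsMinOn (fdiff ξ η) (Icc s a) s :=
    (runMin_lt_fdiff_iff (hsub hs).1.2).1 (hsub hs).2
  have isMinOn_endpoint (t) (ht : t ∈ Icc u v)
      (htE : t ∉ {t ∈ Icc b a | runMin ξ η a t < fdiff ξ η t}) :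
      IsMinOn (fdiff ξ η) (Icc t a) t :=
    not_not.1 fun hmin ↦ htE ⟨hIcc ht, (runMin_lt_fdiff_iff (hIcc ht).2).2 hmin⟩
  have hu := isMinOn_endpoint u (left_mem_Icc.2 huv.le)
    (left_notMem_of_connectedComponentIn_eq_Ioo hx hE)
  have hv := isMinOn_endpoint v (right_mem_Icc.2 huv.le)
    (right_notMem_of_connectedComponentIn_eq_Ioo hx hE)
  have endpoints_eq : fdiff ξ η u = fdiff ξ η v :=
    eq_of_forall_Ioo_not_isMinOn huv (hIcc (right_mem_Icc.2 huv.le)).2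
      continuous_fdiff.continuousOn hu hv hIoo
  exact ⟨measure_setOf_tauE_le hsing (fun s hs ↦ (hsub hs).1.2) hIoo,
    measure_Ioo_eq_of_fdiff_eq huv.le endpoints_eq.symm⟩

end Fdiff

/-- for every connected component `(u,v)` of `{t ∈ [0,a] : f(t) > m(t)}` one has
`ξ{s ∈ (u,v) : τ(s) ≤ a} = ξ((u,v)) = η((u,v))`. -/
theorem excursion_balance (ξ η : Measure ℝ)
    [IsLocallyFiniteMeasure ξ] [IsLocallyFiniteMeasure η]
    (hξd : ∀ x : ℝ, ξ {x} = 0) (hηd : ∀ x : ℝ, η {x} = 0)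
    (hsing : ξ.MutuallySingular η)
    (a : ℝ) (ha : 0 < a) (hf : ∀ t ∈ Set.Ioo 0 a, 0 ≤ fdiff ξ η t)
    (u v : ℝ)
    (hcomp : ∃ x ∈ {t ∈ Set.Icc 0 a | runMin ξ η a t < fdiff ξ η t},
      connectedComponentIn {t ∈ Set.Icc 0 a | runMin ξ η a t < fdiff ξ η t} x = Set.Ioo u v) :
    ξ {s ∈ Set.Ioo u v | tauE ξ η s ≤ (a : EReal)} = ξ (Set.Ioo u v) ∧
      ξ (Set.Ioo u v) = η (Set.Ioo u v) := by
  have : NullSingletonClass ξ := ⟨hξd⟩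
  have : NullSingletonClass η := ⟨hηd⟩
  exact excursion_balance_general hsing hcomp
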